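/- Let v and u be real-valued functions in L¹([−π,π]) ∩ L²([−π,π]) with Fourier coefficients {v_j} and {u_j}. Suppose |v(ω)| ≤ M₁ < ∞ and v(ω) ≥ m > 0 for almost every ω, and Σ_{j=−∞}^{∞} |j| |u_j|² ≤ M₂ < ∞. Then for every n ≥ 1, tr{[T_n(v)^{−1} T_n(vu)]²} ≤ (n/π) ∫_{−π}^{π} u(ω)² dω + 8 m^{−2} M₁² M₂. -/

import Mathlib

open MeasureTheory

/-- The `j`-th Fourier coefficient `v_j = (1/(2π)) ∫_{−π}^{π} v(ω) e^{−iωj} dω` of an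
integrable function `v` on `[−π, π]`. -/
noncomputable def fCoef (v : ℝ → ℝ) (j : ℤ) : ℂ :=
  (((2 * Real.pi)⁻¹ : ℝ) : ℂ) *
    ∫ ω in Set.Icc (-Real.pi) Real.pi, (v ω : ℂ) * Complex.exp (-(Complex.I * ω * j))

/-- The `n×n` Toeplitz matrix `T_n(v)` with entries `[T_n(v)]_{jk} = v_{j−k}`. -/
noncomputable def Toep (n : ℕ) (v : ℝ → ℝ) : Matrix (Fin n) (Fin n) ℂ :=
  Matrix.of fun j k : Fin n => fCoef v ((j : ℤ) - (k : ℤ))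

/-!
For `T_n(v)` the lower bound `v ≥ m` gives coercivity, so left multiplication by `T_n(v)⁻¹` costs at
most `m⁻¹` in Hilbert–Schmidt norm; since `|tr X²| ≤ ‖X‖²`, everything reduces to bounding `T_n(u)`
and the defect `T_n(vu) - T_n(v) T_n(u)` in that norm. The `k`-th column of the defect consists of
Fourier coefficients of `v` times the part of `e_k u` with frequencies outside `[0, n)`. The mode
`d` of `u` is shifted out of `[0, n)` by at most `|d|` of the `e_k`, hence the weight `|d|`.
-/

open AddCircle Matrix
open scoped Matrix.Norms.Frobenius ComplexConjugate
open WithLp (toLp)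

section Frobenius

variable {𝕜 l n : Type*} [RCLike 𝕜] [Fintype l] [Fintype n]

lemma frobenius_norm_sq_eq_sum (A : Matrix l n 𝕜) : ‖A‖ ^ 2 = ∑ i, ∑ j, ‖A i j‖ ^ 2 := by
  rw [frobenius_norm_def, ← Real.sqrt_eq_rpow, Real.sq_sqrt (by positivity)]
  simp only [Real.rpow_two]

lemma frobenius_norm_sq_eq_sum_col (A : Matrix l n 𝕜) :
    ‖A‖ ^ 2 = ∑ k, ‖toLp 2 (A.col k)‖ ^ 2 := by
  simp only [frobenius_norm_sq_eq_sum, EuclideanSpace.norm_sq_eq, col_apply]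
  exact Finset.sum_comm

lemma norm_trace_mul_le (A : Matrix l n 𝕜) (B : Matrix n l 𝕜) :
    ‖trace (A * B)‖ ≤ ‖A‖ * ‖B‖ := by
  refine le_of_sq_le_sq ?_ (by positivity)
  calc ‖trace (A * B)‖ ^ 2
      ≤ (∑ p : l × n, ‖A p.1 p.2‖ * ‖B p.2 p.1‖) ^ 2 := by
        gcongr
        simp only [trace, diag_apply, mul_apply, ← norm_mul, Fintype.sum_prod_type]
        exact (norm_sum_le _ _).trans (Finset.sum_le_sum fun i _ => norm_sum_le _ _)
    _ ≤ (∑ p : l × n, ‖A p.1 p.2‖ ^ 2) * ∑ p : l × n, ‖B p.2 p.1‖ ^ 2 :=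
        Finset.sum_mul_sq_le_sq_mul_sq _ _ _
    _ = (‖A‖ * ‖B‖) ^ 2 := by
        rw [mul_pow, frobenius_norm_sq_eq_sum, frobenius_norm_sq_eq_sum, Fintype.sum_prod_type,
          Fintype.sum_prod_type_right]

end Frobenius

section Coercive

variable {𝕜 l n : Type*} [RCLike 𝕜] [Fintype l] [Fintype n]

/-- Coercivity of a square matrix with constant `m`: its numerical range lies in the half-plane
`m ≤ re z`. -/
def CoerciveWith (m : ℝ) (A : Matrix n n 𝕜) : Prop :=
  ∀ x : n → 𝕜, m * ‖toLp 2 x‖ ^ 2 ≤ RCLike.re (star x ⬝ᵥ A *ᵥ x)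

namespace CoerciveWith

variable {m : ℝ} {A : Matrix n n 𝕜}

lemma mul_norm_le_norm_mulVec (hA : CoerciveWith m A) (x : n → 𝕜) :
    m * ‖toLp 2 x‖ ≤ ‖toLp 2 (A *ᵥ x)‖ := by
  rcases (norm_nonneg (toLp 2 x)).eq_or_lt with hx | hx
  · simp [← hx]
  · refine le_of_mul_le_mul_left ?_ hx
    calc ‖toLp 2 x‖ * (m * ‖toLp 2 x‖) = m * ‖toLp 2 x‖ ^ 2 := by ring
      _ ≤ RCLike.re (inner 𝕜 (toLp 2 x) (toLp 2 (A *ᵥ x))) := by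
        rw [EuclideanSpace.inner_toLp_toLp, dotProduct_comm]
        exact hA x
      _ ≤ ‖toLp 2 x‖ * ‖toLp 2 (A *ᵥ x)‖ := re_inner_le_norm _ _

lemma mul_frobenius_norm_le (hA : CoerciveWith m A) (hm : 0 ≤ m) (B : Matrix n l 𝕜) :
    m * ‖B‖ ≤ ‖A * B‖ := by
  refine le_of_sq_le_sq ?_ (norm_nonneg _)
  rw [mul_pow, frobenius_norm_sq_eq_sum_col, frobenius_norm_sq_eq_sum_col, Finset.mul_sum]
  refine Finset.sum_le_sum fun k _ => ?_
  rw [← mul_pow]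
  exact pow_le_pow_left₀ (by positivity) (hA.mul_norm_le_norm_mulVec (B.col k)) 2

variable [DecidableEq n]

lemma isUnit_det (hA : CoerciveWith m A) (hm : 0 < m) : IsUnit A.det := by
  rw [← isUnit_iff_isUnit_det, ← mulVec_injective_iff_isUnit, ← coe_mulVecLin,
    injective_iff_map_eq_zero]
  intro x hx
  have hmx : m * ‖toLp 2 x‖ ≤ 0 := by
    simpa [show A *ᵥ x = 0 from hx] using hA.mul_norm_le_norm_mulVec x
  simpa using nonpos_of_mul_nonpos_right hmx hm

lemma frobenius_norm_inv_mul_le (hA : CoerciveWith m A) (hm : 0 < m) (B : Matrix n l 𝕜) :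
    ‖A⁻¹ * B‖ ≤ m⁻¹ * ‖B‖ := by
  rw [le_inv_mul_iff₀ hm]
  simpa only [mul_nonsing_inv_cancel_left A B (hA.isUnit_det hm)] using
    hA.mul_frobenius_norm_le hm.le (A⁻¹ * B)

lemma frobenius_norm_inv_mul_sq_le (hA : CoerciveWith m A) (hm : 0 < m) (B C : Matrix n l 𝕜) :
    ‖A⁻¹ * B‖ ^ 2 ≤ 2 * (‖C‖ ^ 2 + (m ^ 2)⁻¹ * ‖B - A * C‖ ^ 2) := by
  have hsplit : A⁻¹ * B = C + A⁻¹ * (B - A * C) := by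
    rw [Matrix.mul_sub, nonsing_inv_mul_cancel_left A C (hA.isUnit_det hm), add_sub_cancel]
  calc ‖A⁻¹ * B‖ ^ 2 ≤ (‖C‖ + ‖A⁻¹ * (B - A * C)‖) ^ 2 := by
        rw [hsplit]
        gcongr
        exact norm_add_le _ _
    _ ≤ 2 * (‖C‖ ^ 2 + ‖A⁻¹ * (B - A * C)‖ ^ 2) := add_sq_le
    _ ≤ 2 * (‖C‖ ^ 2 + (m⁻¹ * ‖B - A * C‖) ^ 2) := by
        gcongr
        exact hA.frobenius_norm_inv_mul_le hm _
    _ = _ := by ring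

end CoerciveWith

end Coercive

lemma integral_norm_mul_sq_le {α 𝕜 : Type*} [MeasurableSpace α] [RCLike 𝕜] {μ : Measure α}
    {f g : α → 𝕜} {M : ℝ} (hM : ∀ᵐ t ∂μ, ‖f t‖ ≤ M) (hg : MemLp g 2 μ) :
    ∫ t, ‖(f * g) t‖ ^ 2 ∂μ ≤ M ^ 2 * ∫ t, ‖g t‖ ^ 2 ∂μ := by
  rw [← integral_const_mul]
  refine integral_mono_of_nonneg (ae_of_all _ fun t => by positivity)
    (hg.norm.integrable_sq.const_mul _) ?_
  filter_upwards [hM] with t ht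
  rw [Pi.mul_apply, norm_mul, mul_pow]
  gcongr

section Circle

variable {T : ℝ} {n : ℕ} {f g : AddCircle T → ℂ}

/-- The trigonometric polynomial `∑ₖ xₖ eₖ` of degree less than `n` with coefficient vector `x`. -/
noncomputable def trigPoly (x : Fin n → ℂ) : AddCircle T → ℂ :=
  ∑ k : Fin n, x k • ⇑(fourier (k : ℤ))

lemma mul_trigPoly (f : AddCircle T → ℂ) (x : Fin n → ℂ) :
    f * trigPoly x = ∑ k : Fin n, x k • (⇑(fourier (k : ℤ)) * f) := by
  ext t
  simp only [trigPoly, Pi.mul_apply, Finset.sum_apply, Pi.smul_apply, Finset.mul_sum,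
    smul_eq_mul]
  exact Finset.sum_congr rfl fun k _ => by ring

variable [Fact (0 < T)]

lemma fourierCoeff_fourier_mul (f : AddCircle T → ℂ) (k j : ℤ) :
    fourierCoeff (⇑(fourier k) * f) j = fourierCoeff f (j - k) := by
  refine integral_congr_ae (ae_of_all _ fun t => ?_)
  simp only [Pi.mul_apply, smul_eq_mul, ← mul_assoc, ← fourier_add]
  rw [neg_sub, neg_add_eq_sub]

lemma fourierCoeff_sub {E : Type*} [NormedAddCommGroup E] [NormedSpace ℂ E]
    {f g : AddCircle T → E} (hf : Integrable f haarAddCircle) (hg : Integrable g haarAddCircle)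
    (j : ℤ) : fourierCoeff (f - g) j = fourierCoeff f j - fourierCoeff g j := by
  simp only [fourierCoeff, Pi.sub_apply, smul_sub]
  exact integral_sub (hf.fourier_smul _) (hg.fourier_smul _)

lemma memLp_top_fourier (k : ℤ) : MemLp (@fourier T k) ⊤ haarAddCircle :=
  memLp_top_of_bound (map_continuous (fourier k)).aestronglyMeasurable ‖@fourier T k‖
    (ae_of_all _ (fourier k).norm_coe_le_norm)

lemma memLp_fourier_mul {p : ENNReal} (hf : MemLp f p haarAddCircle) (k : ℤ) :
    MemLp (⇑(fourier k) * f) p haarAddCircle :=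
  hf.mul (memLp_top_fourier k)

lemma integral_norm_fourier_mul_sq (f : AddCircle T → ℂ) (k : ℤ) :
    ∫ t, ‖(⇑(fourier k) * f : AddCircle T → ℂ) t‖ ^ 2 ∂haarAddCircle =
      ∫ t, ‖f t‖ ^ 2 ∂haarAddCircle := by
  simp only [Pi.mul_apply, norm_mul, fourier_apply, Circle.norm_coe, one_mul]

lemma hasSum_norm_fourierCoeff_sq (hf : MemLp f 2 haarAddCircle) :
    HasSum (fun j => ‖fourierCoeff f j‖ ^ 2) (∫ t, ‖f t‖ ^ 2 ∂haarAddCircle) := by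
  convert hasSum_sq_fourierCoeff hf.toLp using 1
  · rw [fourierCoeff_congr_ae hf.coeFn_toLp]
  · refine integral_congr_ae ?_
    filter_upwards [hf.coeFn_toLp] with t ht
    rw [ht]

lemma norm_toLp_fourierCoeff_sq_le (n : ℕ) (hf : MemLp f 2 haarAddCircle) :
    ‖toLp 2 (fun j : Fin n => fourierCoeff f j)‖ ^ 2 ≤ ∫ t, ‖f t‖ ^ 2 ∂haarAddCircle := by
  let emb : Fin n ↪ ℤ := Fin.valEmbedding.trans Nat.castEmbedding
  rw [EuclideanSpace.norm_sq_eq]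
  have hbessel := sum_le_hasSum (Finset.univ.map emb) (fun _ _ => by positivity)
    (hasSum_norm_fourierCoeff_sq hf)
  rwa [Finset.sum_map] at hbessel

lemma memLp_top_trigPoly (x : Fin n → ℂ) : MemLp (trigPoly x : AddCircle T → ℂ) ⊤ haarAddCircle :=
  memLp_finsetSum' _ fun k _ => (memLp_top_fourier (k : ℤ)).const_smul (x k)

lemma fourierCoeff_mul_trigPoly (hf : Integrable f haarAddCircle) (x : Fin n → ℂ) (j : ℤ) :
    fourierCoeff (f * trigPoly x) j = ∑ k : Fin n, x k * fourierCoeff f (j - k) := by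
  have hint (k : Fin n) : Integrable (x k • (⇑(fourier (k : ℤ)) * f)) haarAddCircle :=
    (hf.fourier_smul (k : ℤ)).smul (x k)
  rw [mul_trigPoly, fourierCoeff.sum _ _ fun k _ => hint k, Finset.sum_apply]
  exact Finset.sum_congr rfl fun k _ => by
    rw [fourierCoeff.const_smul, fourierCoeff_fourier_mul, smul_eq_mul]

/-- The `n × n` Toeplitz matrix `T_n(f)` with entries `f̂ (j - k)`, for a complex symbol `f` on a
circle of arbitrary length. -/
noncomputable def toeplitz (n : ℕ) (f : AddCircle T → ℂ) : Matrix (Fin n) (Fin n) ℂ :=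
  of fun j k => fourierCoeff f (j - k)

lemma toeplitz_col (f : AddCircle T → ℂ) (k : Fin n) :
    (toeplitz n f).col k = fun j : Fin n => fourierCoeff (⇑(fourier (k : ℤ)) * f) j := by
  funext j
  rw [fourierCoeff_fourier_mul]
  rfl

lemma fourierCoeff_one : fourierCoeff (1 : AddCircle T → ℂ) = Pi.single 0 1 := by
  rw [← fourierCoeff_fourier (T := T) 0]
  congr 1
  ext t
  exact fourier_zero.symm

lemma fourierCoeff_trigPoly (n : ℕ) (c : ℤ → ℂ) :
    fourierCoeff (trigPoly fun k : Fin n => c k : AddCircle T → ℂ) =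
      (Set.Ico (0 : ℤ) n).indicator c := by
  funext j
  have hsum := fourierCoeff_mul_trigPoly (T := T) (f := 1) (integrable_const 1)
    (fun k : Fin n => c k) j
  rw [one_mul, fourierCoeff_one] at hsum
  rw [hsum, Set.indicator_apply]
  split_ifs with hj
  · obtain ⟨l, rfl⟩ := Int.eq_ofNat_of_zero_le hj.1
    have hl : l < n := by exact_mod_cast hj.2
    rw [Finset.sum_eq_single (⟨l, hl⟩ : Fin n) (fun k _ hk => ?_) (by simp)]
    · simp
    · have hne : (l : ℤ) - (k : ℕ) ≠ 0 := by grind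
      rw [Pi.single_eq_of_ne hne, mul_zero]
  · refine Finset.sum_eq_zero fun k _ => ?_
    have hne : j - (k : ℕ) ≠ 0 := by grind
    rw [Pi.single_eq_of_ne hne, mul_zero]

lemma toeplitz_one : toeplitz n (1 : AddCircle T → ℂ) = 1 := by
  ext j k
  simp [toeplitz, fourierCoeff_one, Pi.single_apply, sub_eq_zero, one_apply, Fin.ext_iff]

lemma toeplitz_mulVec (hf : Integrable f haarAddCircle) (x : Fin n → ℂ) :
    toeplitz n f *ᵥ x = fun j : Fin n => fourierCoeff (f * trigPoly x) j := by
  funext j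
  simp only [fourierCoeff_mul_trigPoly hf, mulVec, dotProduct, toeplitz, of_apply, mul_comm]

lemma star_dotProduct_toeplitz_mulVec (hf : Integrable f haarAddCircle) (x : Fin n → ℂ) :
    star x ⬝ᵥ toeplitz n f *ᵥ x = ∫ t : AddCircle T, f t * ‖trigPoly x t‖ ^ 2 ∂haarAddCircle := by
  set p : AddCircle T → ℂ := trigPoly x with hp
  have hfp : Integrable (f * p) haarAddCircle := hf.mul_of_top_left (memLp_top_trigPoly _)
  have hconj (t : AddCircle T) : conj (p t) = ∑ j : Fin n, conj (x j) * fourier (-j : ℤ) t := by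
    simp only [hp, trigPoly, Finset.sum_apply, Pi.smul_apply, smul_eq_mul, map_sum, map_mul,
      fourier_neg]
  calc star x ⬝ᵥ toeplitz n f *ᵥ x
      = ∑ j : Fin n, ∫ t : AddCircle T, conj (x j) * (fourier (-j : ℤ) t * (f * p) t)
          ∂haarAddCircle := by
        simp only [toeplitz_mulVec hf, dotProduct, fourierCoeff, integral_const_mul, Pi.star_apply,
          RCLike.star_def, smul_eq_mul, ← hp]
    _ = ∫ t : AddCircle T, ∑ j : Fin n, conj (x j) * (fourier (-j : ℤ) t * (f * p) t)
          ∂haarAddCircle :=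
        (integral_finsetSum _ fun j _ => (hfp.fourier_smul _).const_mul _).symm
    _ = ∫ t : AddCircle T, f t * ‖p t‖ ^ 2 ∂haarAddCircle := by
        congr 1 with t
        simp only [Pi.mul_apply, ← mul_assoc, ← Finset.sum_mul, ← hconj]
        rw [← Complex.conj_mul']
        ring

lemma integral_norm_trigPoly_sq (x : Fin n → ℂ) :
    ∫ t : AddCircle T, ‖trigPoly x t‖ ^ 2 ∂haarAddCircle = ‖toLp 2 x‖ ^ 2 := by
  have hquadratic := star_dotProduct_toeplitz_mulVec (T := T) (f := 1) (integrable_const 1) x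
  have hnorm : star x ⬝ᵥ x = ((‖toLp 2 x‖ ^ 2 : ℝ) : ℂ) := by
    rw [dotProduct_comm, ← EuclideanSpace.inner_toLp_toLp, inner_self_eq_norm_sq_to_K]
    push_cast
    rfl
  simp only [toeplitz_one, one_mulVec, Pi.one_apply, one_mul, hnorm, ← Complex.ofReal_pow,
    integral_complex_ofReal] at hquadratic
  exact (Complex.ofReal_injective hquadratic).symm

lemma coerciveWith_toeplitz {m : ℝ} (hf : Integrable f haarAddCircle)
    (hm : ∀ᵐ t ∂haarAddCircle, m ≤ (f t).re) : CoerciveWith m (toeplitz n f) := by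
  intro x
  set p : AddCircle T → ℂ := trigPoly x
  have hp : MemLp (fun t => ‖p t‖ ^ 2) ⊤ haarAddCircle := by
    simp only [sq]
    exact (memLp_top_trigPoly x).norm.mul (memLp_top_trigPoly x).norm
  have hfp : Integrable (fun t => f t * ((‖p t‖ ^ 2 : ℝ) : ℂ)) haarAddCircle :=
    hf.mul_of_top_left hp.ofReal
  simp only [Complex.ofReal_pow] at hfp
  rw [star_dotProduct_toeplitz_mulVec hf, ← integral_re hfp, ← integral_norm_trigPoly_sq (T := T),
    ← integral_const_mul]
  refine integral_mono_ae ((hp.integrable le_top).const_mul m) hfp.re ?_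
  filter_upwards [hm] with t ht
  rw [RCLike.re_eq_complex_re, ← Complex.ofReal_pow, Complex.re_mul_ofReal]
  exact mul_le_mul_of_nonneg_right ht (by positivity)

lemma frobenius_norm_toeplitz_sq_le (n : ℕ) (hf : MemLp f 2 haarAddCircle) :
    ‖toeplitz n f‖ ^ 2 ≤ n * ∫ t, ‖f t‖ ^ 2 ∂haarAddCircle := by
  calc ‖toeplitz n f‖ ^ 2 = ∑ k, ‖toLp 2 ((toeplitz n f).col k)‖ ^ 2 :=
        frobenius_norm_sq_eq_sum_col _
    _ ≤ ∑ _k : Fin n, ∫ t, ‖f t‖ ^ 2 ∂haarAddCircle := by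
        refine Finset.sum_le_sum fun k _ => ?_
        rw [toeplitz_col, ← integral_norm_fourier_mul_sq f k]
        exact norm_toLp_fourierCoeff_sq_le n (memLp_fourier_mul hf k)
    _ = n * ∫ t, ‖f t‖ ^ 2 ∂haarAddCircle := by simp

/-- What remains of `f` after removing its Fourier modes `0, …, n - 1`. -/
noncomputable def fourierTail (n : ℕ) (f : AddCircle T → ℂ) : AddCircle T → ℂ :=
  f - trigPoly fun l : Fin n => fourierCoeff f l

lemma memLp_fourierTail {p : ENNReal} (n : ℕ) (hf : MemLp f p haarAddCircle) :
    MemLp (fourierTail n f) p haarAddCircle :=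
  hf.sub ((memLp_top_trigPoly _).mono_exponent le_top)

lemma fourierCoeff_fourierTail (n : ℕ) (hf : Integrable f haarAddCircle) :
    fourierCoeff (fourierTail n f) = (Set.Ico (0 : ℤ) n)ᶜ.indicator (fourierCoeff f) := by
  funext j
  rw [fourierTail, fourierCoeff_sub hf ((memLp_top_trigPoly _).integrable le_top),
    fourierCoeff_trigPoly, Set.indicator_compl, Pi.sub_apply]

lemma toeplitz_mul_sub_col (hf : Integrable f haarAddCircle)
    (hfg : Integrable (f * g) haarAddCircle) (k : Fin n) :
    (toeplitz n (f * g) - toeplitz n f * toeplitz n g).col k =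
      fun j : Fin n => fourierCoeff (f * fourierTail n (⇑(fourier (k : ℤ)) * g)) j := by
  set q : AddCircle T → ℂ := trigPoly ((toeplitz n g).col k) with hq
  have htail : f * fourierTail n (⇑(fourier (k : ℤ)) * g) =
      ⇑(fourier (k : ℤ)) * (f * g) - f * q := by
    rw [fourierTail, ← toeplitz_col, ← hq, mul_sub, mul_left_comm]
  calc (toeplitz n (f * g) - toeplitz n f * toeplitz n g).col k
      = (toeplitz n (f * g)).col k - toeplitz n f *ᵥ (toeplitz n g).col k := rfl
    _ = _ := by
      have hkfg : Integrable (⇑(fourier (k : ℤ)) * (f * g)) haarAddCircle := hfg.fourier_smul _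
      have hfq : Integrable (f * q) haarAddCircle := hf.mul_of_top_left (memLp_top_trigPoly _)
      rw [toeplitz_col, toeplitz_mulVec hf, ← hq, htail]
      exact funext fun j => (fourierCoeff_sub hkfg hfq j).symm

lemma card_filter_add_notMem_Ico_le (n : ℕ) (d : ℤ) :
    (Finset.univ.filter fun k : Fin n => d + k ∉ Set.Ico (0 : ℤ) n).card ≤ d.natAbs := by
  rw [← Finset.card_range d.natAbs]
  refine Finset.card_le_card_of_injOn (fun k => if 0 ≤ d then n - 1 - k else k) ?_ ?_
  · intro k hk
    simp only [Finset.coe_filter, Set.mem_ofPred_eq, Set.mem_Ico, Finset.mem_univ, true_and] at hk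
    simp only [Finset.coe_range, Set.mem_Iio]
    split_ifs <;> omega
  · intro k _ l _ hkl
    ext
    dsimp only at hkl
    split_ifs at hkl <;> omega

lemma hasSum_norm_fourierCoeff_fourierTail_sq (n : ℕ) (hg : MemLp g 2 haarAddCircle) (k : ℤ) :
    HasSum (fun d : ℤ => if d + k ∈ Set.Ico (0 : ℤ) n then 0 else ‖fourierCoeff g d‖ ^ 2)
      (∫ t, ‖fourierTail n (⇑(fourier k) * g) t‖ ^ 2 ∂haarAddCircle) := by
  have hkg := memLp_fourier_mul hg k
  have hparseval := hasSum_norm_fourierCoeff_sq (memLp_fourierTail n hkg)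
  rw [← (Equiv.addRight k).hasSum_iff,
    fourierCoeff_fourierTail n (hkg.integrable one_le_two)] at hparseval
  convert hparseval using 2 with d
  simp only [Function.comp_apply, Equiv.coe_addRight, Set.indicator_apply, Set.mem_compl_iff,
    fourierCoeff_fourier_mul, add_sub_cancel_right]
  split_ifs <;> simp_all

lemma sum_integral_norm_fourierTail_sq_le (n : ℕ) (hg : MemLp g 2 haarAddCircle)
    (hsum : Summable fun j : ℤ => |(j : ℝ)| * ‖fourierCoeff g j‖ ^ 2) :
    ∑ k : Fin n, ∫ t, ‖fourierTail n (⇑(fourier (k : ℤ)) * g) t‖ ^ 2 ∂haarAddCircle ≤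
      ∑' j : ℤ, |(j : ℝ)| * ‖fourierCoeff g j‖ ^ 2 := by
  refine hasSum_le (fun d => ?_)
    (hasSum_sum fun (k : Fin n) _ => hasSum_norm_fourierCoeff_fourierTail_sq n hg k) hsum.hasSum
  calc ∑ k : Fin n, (if d + k ∈ Set.Ico (0 : ℤ) n then 0 else ‖fourierCoeff g d‖ ^ 2)
      = (Finset.univ.filter fun k : Fin n => d + k ∉ Set.Ico (0 : ℤ) n).card *
          ‖fourierCoeff g d‖ ^ 2 := by
        simp only [← ite_not (d + _ ∈ _), ← Finset.sum_filter, Finset.sum_const, nsmul_eq_mul]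
    _ ≤ |(d : ℝ)| * ‖fourierCoeff g d‖ ^ 2 := by
        rw [← Int.cast_abs, ← Nat.cast_natAbs]
        gcongr
        exact card_filter_add_notMem_Ico_le n d

lemma frobenius_norm_toeplitz_mul_sub_sq_le {M : ℝ} (n : ℕ)
    (hf : AEStronglyMeasurable f haarAddCircle) (hM : ∀ᵐ t ∂haarAddCircle, ‖f t‖ ≤ M)
    (hg : MemLp g 2 haarAddCircle)
    (hsum : Summable fun j : ℤ => |(j : ℝ)| * ‖fourierCoeff g j‖ ^ 2) :
    ‖toeplitz n (f * g) - toeplitz n f * toeplitz n g‖ ^ 2 ≤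
      M ^ 2 * ∑' j : ℤ, |(j : ℝ)| * ‖fourierCoeff g j‖ ^ 2 := by
  have hfint : Integrable f haarAddCircle := (memLp_top_of_bound hf M hM).integrable le_top
  have hfg : Integrable (f * g) haarAddCircle := (hg.integrable one_le_two).bdd_mul hf hM
  calc ‖toeplitz n (f * g) - toeplitz n f * toeplitz n g‖ ^ 2
      = ∑ k : Fin n, ‖toLp 2 ((toeplitz n (f * g) - toeplitz n f * toeplitz n g).col k)‖ ^ 2 :=
        frobenius_norm_sq_eq_sum_col _
    _ ≤ ∑ k : Fin n, M ^ 2 *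
          ∫ t, ‖fourierTail n (⇑(fourier (k : ℤ)) * g) t‖ ^ 2 ∂haarAddCircle := by
        refine Finset.sum_le_sum fun k _ => ?_
        have htail := memLp_fourierTail n (memLp_fourier_mul hg k)
        rw [toeplitz_mul_sub_col hfint hfg]
        exact (norm_toLp_fourierCoeff_sq_le n (htail.mul (memLp_top_of_bound hf M hM))).trans
          (integral_norm_mul_sq_le hM htail)
    _ ≤ M ^ 2 * ∑' j : ℤ, |(j : ℝ)| * ‖fourierCoeff g j‖ ^ 2 := by
        rw [← Finset.mul_sum]
        gcongr
        exact sum_integral_norm_fourierTail_sq_le n hg hsum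

theorem stmt19_general {m M : ℝ} (n : ℕ) (hm : 0 < m)
    (hf : AEStronglyMeasurable f haarAddCircle) (hM : ∀ᵐ t ∂haarAddCircle, ‖f t‖ ≤ M)
    (hlow : ∀ᵐ t ∂haarAddCircle, m ≤ (f t).re) (hg : MemLp g 2 haarAddCircle)
    (hsum : Summable fun j : ℤ => |(j : ℝ)| * ‖fourierCoeff g j‖ ^ 2) :
    ‖trace (((toeplitz n f)⁻¹ * toeplitz n (f * g)) *
        ((toeplitz n f)⁻¹ * toeplitz n (f * g)))‖ ≤
      2 * (n * ∫ t, ‖g t‖ ^ 2 ∂haarAddCircle +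
        (m ^ 2)⁻¹ * (M ^ 2 * ∑' j : ℤ, |(j : ℝ)| * ‖fourierCoeff g j‖ ^ 2)) := by
  have hcoercive : CoerciveWith m (toeplitz n f) :=
    coerciveWith_toeplitz ((memLp_top_of_bound hf M hM).integrable le_top) hlow
  calc ‖trace (((toeplitz n f)⁻¹ * toeplitz n (f * g)) *
          ((toeplitz n f)⁻¹ * toeplitz n (f * g)))‖
      ≤ ‖(toeplitz n f)⁻¹ * toeplitz n (f * g)‖ ^ 2 := by
        rw [sq]
        exact norm_trace_mul_le _ _
    _ ≤ 2 * (‖toeplitz n g‖ ^ 2 +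
          (m ^ 2)⁻¹ * ‖toeplitz n (f * g) - toeplitz n f * toeplitz n g‖ ^ 2) :=
        hcoercive.frobenius_norm_inv_mul_sq_le hm _ _
    _ ≤ _ := by
        gcongr
        · exact frobenius_norm_toeplitz_sq_le n hg
        · exact frobenius_norm_toeplitz_mul_sub_sq_le n hf hM hg hsum

end Circle

section Interval

lemma ae_liftIoc {T : ℝ} [Fact (0 < T)] {α : Type*} {a : ℝ} {f : ℝ → α} {P : α → Prop}
    (h : ∀ᵐ ω ∂volume.restrict (Set.Ioc a (a + T)), P (f ω)) :
    ∀ᵐ t ∂haarAddCircle, P (liftIoc T a f t) := by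
  have hpres : MeasurePreserving (Subtype.val ∘ equivIoc T a) volume
      (volume.restrict (Set.Ioc a (a + T))) :=
    (measurePreserving_subtype_coe measurableSet_Ioc).comp (AddCircle.measurePreserving_equivIoc T)
  have hvol := hpres.quasiMeasurePreserving.ae h
  rw [volume_eq_smul_haarAddCircle, Measure.ae_ennreal_smul_measure_eq
    (ENNReal.ofReal_pos.2 Fact.out).ne'] at hvol
  exact hvol

instance fact_zero_lt_two_pi : Fact (0 < 2 * Real.pi) := ⟨Real.two_pi_pos⟩

/-- The function on the circle `ℝ ⧸ 2πℤ` that agrees with `v` on `(-π, π]`; it turns the concrete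
objects `fCoef` and `Toep` into `fourierCoeff` and `toeplitz`. -/
noncomputable def circleLift (v : ℝ → ℝ) : AddCircle (2 * Real.pi) → ℂ :=
  liftIoc (2 * Real.pi) (-Real.pi) fun ω => (v ω : ℂ)

lemma neg_pi_add_two_pi : -Real.pi + 2 * Real.pi = Real.pi := by ring

lemma ae_circleLift {v : ℝ → ℝ} {P : ℂ → Prop}
    (h : ∀ᵐ ω ∂volume.restrict (Set.Icc (-Real.pi) Real.pi), P (v ω)) :
    ∀ᵐ t ∂haarAddCircle, P (circleLift v t) := by
  refine ae_liftIoc ?_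
  rw [neg_pi_add_two_pi]
  exact ae_restrict_of_ae_restrict_of_subset Set.Ioc_subset_Icc_self h

lemma memLp_circleLift {v : ℝ → ℝ} {p : ENNReal}
    (hv : MemLp v p (volume.restrict (Set.Icc (-Real.pi) Real.pi))) :
    MemLp (circleLift v) p haarAddCircle := by
  refine MemLp.haarAddCircle (MemLp.memLp_liftIoc ?_)
  rw [neg_pi_add_two_pi]
  exact (hv.mono_measure (Measure.restrict_mono Set.Ioc_subset_Icc_self le_rfl)).ofReal

lemma circleLift_mul (v u : ℝ → ℝ) :
    circleLift (fun ω => v ω * u ω) = circleLift v * circleLift u :=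
  funext fun _ => Complex.ofReal_mul _ _

lemma integral_norm_circleLift_sq (u : ℝ → ℝ) :
    ∫ t, ‖circleLift u t‖ ^ 2 ∂haarAddCircle =
      (2 * Real.pi)⁻¹ * ∫ ω in Set.Icc (-Real.pi) Real.pi, u ω ^ 2 := by
  have hlift : (fun t => ‖circleLift u t‖ ^ 2) =
      liftIoc (2 * Real.pi) (-Real.pi) fun ω => u ω ^ 2 := by
    funext t
    exact (congrArg (· ^ 2) (Complex.norm_real _)).trans (sq_abs _)
  rw [hlift, integral_haarAddCircle, integral_liftIoc_eq_intervalIntegral, neg_pi_add_two_pi,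
    intervalIntegral.integral_of_le (neg_le_self Real.pi_nonneg), integral_Icc_eq_integral_Ioc,
    smul_eq_mul]

lemma fourierCoeff_circleLift (v : ℝ → ℝ) : fourierCoeff (circleLift v) = fCoef v := by
  funext j
  rw [circleLift, fourierCoeff_liftIoc_eq, fourierCoeffOn_eq_integral, neg_pi_add_two_pi,
    intervalIntegral.integral_of_le (neg_le_self Real.pi_nonneg), fCoef,
    integral_Icc_eq_integral_Ioc, Complex.real_smul, sub_neg_eq_add, ← two_mul, one_div]
  congr 2 with ω
  rw [fourier_coe_apply, smul_eq_mul, mul_comm]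
  congr 2
  have := Real.pi_ne_zero
  push_cast
  field_simp

lemma toeplitz_circleLift (n : ℕ) (v : ℝ → ℝ) : toeplitz n (circleLift v) = Toep n v := by
  rw [toeplitz, fourierCoeff_circleLift, Toep]

end Interval

/-- Lemma, part (vi):
`tr{[T_n(v)⁻¹ T_n(vu)]²} ≤ (n/π) ∫_{−π}^{π} u(ω)² dω + 8 m⁻² M₁² M₂`. -/
theorem stmt19 (n : ℕ) (hn : 1 ≤ n) (v u : ℝ → ℝ) (M₁ M₂ m : ℝ) (hm : 0 < m)
    (hv1 : IntegrableOn v (Set.Icc (-Real.pi) Real.pi))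
    (hv2 : IntegrableOn (fun ω => (v ω) ^ 2) (Set.Icc (-Real.pi) Real.pi))
    (hu1 : IntegrableOn u (Set.Icc (-Real.pi) Real.pi))
    (hu2 : IntegrableOn (fun ω => (u ω) ^ 2) (Set.Icc (-Real.pi) Real.pi))
    (hM1 : ∀ᵐ ω ∂(volume.restrict (Set.Icc (-Real.pi) Real.pi)), |v ω| ≤ M₁)
    (hlow : ∀ᵐ ω ∂(volume.restrict (Set.Icc (-Real.pi) Real.pi)), m ≤ v ω)
    (hsum : Summable fun j : ℤ => |(j : ℝ)| * ‖fCoef u j‖ ^ 2)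
    (hM2 : (∑' j : ℤ, |(j : ℝ)| * ‖fCoef u j‖ ^ 2) ≤ M₂) :
    (Matrix.trace
        (((Toep n v)⁻¹ * Toep n (fun ω => v ω * u ω)) *
          ((Toep n v)⁻¹ * Toep n (fun ω => v ω * u ω)))).re ≤
      (n : ℝ) / Real.pi * (∫ ω in Set.Icc (-Real.pi) Real.pi, (u ω) ^ 2) +
        8 * (m ^ 2)⁻¹ * M₁ ^ 2 * M₂ := by
  have hv : MemLp (circleLift v) 1 haarAddCircle :=
    memLp_circleLift (memLp_one_iff_integrable.2 hv1)
  have hu : MemLp (circleLift u) 2 haarAddCircle :=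
    memLp_circleLift ((memLp_two_iff_integrable_sq hu1.aestronglyMeasurable).2 hu2)
  have hbound : ∀ᵐ t ∂haarAddCircle, ‖circleLift v t‖ ≤ M₁ :=
    ae_circleLift (P := (‖·‖ ≤ M₁)) (by simpa only [Complex.norm_real, Real.norm_eq_abs] using hM1)
  have hpos : ∀ᵐ t ∂haarAddCircle, m ≤ (circleLift v t).re :=
    ae_circleLift (P := (m ≤ ·.re)) hlow
  have hgen := stmt19_general n hm hv.1 hbound hpos hu (by rwa [fourierCoeff_circleLift])
  rw [← circleLift_mul, toeplitz_circleLift, toeplitz_circleLift, integral_norm_circleLift_sq,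
    fourierCoeff_circleLift] at hgen
  have hM₂ : 0 ≤ M₂ := (tsum_nonneg fun j => by positivity).trans hM2
  calc _ ≤ _ := (Complex.re_le_norm _).trans hgen
    _ ≤ 2 * (n * ((2 * Real.pi)⁻¹ * ∫ ω in Set.Icc (-Real.pi) Real.pi, u ω ^ 2) +
          (m ^ 2)⁻¹ * (M₁ ^ 2 * (4 * M₂))) := by
        gcongr
        linarith
    _ = _ := by
        field_simp
        ring
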